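/- Let φ : Σ → Δ be a combinatorial morphism of finite posets, α ∈ Σ, and let μ, ν ∈ ↑φ(α) with μ ⋖ ν (ν covers μ). Then φ⁻¹(ν) ∩ ↑α is the disjoint union, over γ ∈ φ⁻¹(μ) ∩ ↑α, of the sets φ⁻¹(ν) ∩ {η : γ ⋖ η}. -/

import Mathlib

/-- The Alexandrov (up-set) topology on a preorder: open sets are the up-sets. -/
def upTop (P : Type*) [Preorder P] : TopologicalSpace P where
  IsOpen s := IsUpperSet s
  isOpen_univ := isUpperSet_univ
  isOpen_inter := fun _ _ hs ht => hs.inter ht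
  isOpen_sUnion := fun _ h => isUpperSet_sUnion h

/-- A combinatorial morphism of posets: an order-preserving map sending each
principal down-set `Iic α` order-isomorphically onto `Iic (φ α)`. -/
def Combinatorial {P Q : Type*} [PartialOrder P] [PartialOrder Q] (φ : P → Q) : Prop :=
  Monotone φ ∧ ∀ α : P, Set.BijOn φ (Set.Iic α) (Set.Iic (φ α)) ∧
    ∀ x ∈ Set.Iic α, ∀ y ∈ Set.Iic α, (x ≤ y ↔ φ x ≤ φ y)

/-- `m` is balanced on the up-set `V` with respect to `φ`. -/
def BalancedMap {P Q : Type*} [PartialOrder P] [PartialOrder Q]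
    (φ : P → Q) (V : Set P) (m : P → ℤ) : Prop :=
  ∀ α ∈ V, ∀ β : Q, φ α ⋖ β → m α = ∑ᶠ γ ∈ {γ : P | φ γ = β ∧ α ⋖ γ}, m γ

/-! If `η` lies over `ν` and above `α`, then the isomorphism `Iic η ≃o Iic ν` lifts `μ` to exactly
one `γ ≤ η`. It reflects `φ α ≤ μ` to `α ≤ γ` and `μ ⋖ ν` to `γ ⋖ η`; uniqueness of `γ` is
disjointness. -/

theorem covBy_of_strictMono_of_le_of_map_covBy {P Q : Type*} [PartialOrder P] [Preorder Q]
    {f : P → Q} (hf : StrictMono f) {a b : P} (hab : a ≤ b) (h : f a ⋖ f b) : a ⋖ b :=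
  ⟨hab.lt_of_ne fun heq => h.ne (congrArg f heq), fun _ hac hcb => h.2 (hf hac) (hf hcb)⟩

namespace Combinatorial

variable {P Q : Type*} [PartialOrder P] [PartialOrder Q] {φ : P → Q}

theorem injOn_Iic (hφ : Combinatorial φ) (η : P) : Set.InjOn φ (Set.Iic η) :=
  (hφ.2 η).1.injOn

theorem exists_le_map_eq (hφ : Combinatorial φ) {η : P} {μ : Q} (h : μ ≤ φ η) :
    ∃ γ ≤ η, φ γ = μ :=
  (hφ.2 η).1.surjOn h

theorem map_le_map_iff_of_le (hφ : Combinatorial φ) {α γ η : P} (hα : α ≤ η) (hγ : γ ≤ η) :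
    φ α ≤ φ γ ↔ α ≤ γ :=
  ((hφ.2 η).2 α hα γ hγ).symm

theorem strictMono (hφ : Combinatorial φ) : StrictMono φ := fun _ b hab =>
  (hφ.1 hab.le).lt_of_ne fun h => hab.ne (hφ.injOn_Iic b hab.le le_rfl h)

theorem exists_le_covBy_map_eq (hφ : Combinatorial φ) {α η : P} {μ : Q} (hαη : α ≤ η)
    (hμ : φ α ≤ μ) (hcov : μ ⋖ φ η) : ∃ γ, φ γ = μ ∧ α ≤ γ ∧ γ ⋖ η := by
  obtain ⟨γ, hγη, rfl⟩ := hφ.exists_le_map_eq hcov.le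
  exact ⟨γ, rfl, (hφ.map_le_map_iff_of_le hαη hγη).1 hμ,
    covBy_of_strictMono_of_le_of_map_covBy hφ.strictMono hγη hcov⟩

theorem pairwiseDisjoint_Ici_fibre (hφ : Combinatorial φ) (μ : Q) :
    (φ ⁻¹' {μ}).PairwiseDisjoint Set.Ici := fun _ hγ _ hγ' hne =>
  Set.disjoint_left.2 fun η hγη hγη' => hne (hφ.injOn_Iic η hγη hγη' (hγ.trans hγ'.symm))

theorem fibre_inter_Ici_eq_biUnion (hφ : Combinatorial φ) {α : P} {μ ν : Q} (hμ : φ α ≤ μ)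
    (hcov : μ ⋖ ν) :
    φ ⁻¹' {ν} ∩ Set.Ici α
      = ⋃ γ ∈ φ ⁻¹' {μ} ∩ Set.Ici α, (φ ⁻¹' {ν} ∩ {η : P | γ ⋖ η}) := by
  apply Set.Subset.antisymm
  · rintro η ⟨rfl, hαη⟩
    obtain ⟨γ, hγμ, hαγ, hγη⟩ := hφ.exists_le_covBy_map_eq hαη hμ hcov
    exact Set.mem_biUnion ⟨hγμ, hαγ⟩ ⟨rfl, hγη⟩
  · exact Set.iUnion₂_subset fun γ hγ η hη => ⟨hη.1, hγ.2.trans hη.2.le⟩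

end Combinatorial

theorem fibre_partition_of_cover_general {P Q : Type*} [PartialOrder P] [PartialOrder Q]
    {φ : P → Q} (hφ : Combinatorial φ) {α : P} {μ ν : Q} (hμ : φ α ≤ μ) (hcov : μ ⋖ ν) :
    (φ ⁻¹' {ν} ∩ Set.Ici α
        = ⋃ γ ∈ φ ⁻¹' {μ} ∩ Set.Ici α, (φ ⁻¹' {ν} ∩ {η : P | γ ⋖ η})) ∧
    ((φ ⁻¹' {μ} ∩ Set.Ici α).PairwiseDisjoint
        (fun γ => φ ⁻¹' {ν} ∩ {η : P | γ ⋖ η})) :=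
  ⟨hφ.fibre_inter_Ici_eq_biUnion hμ hcov,
    ((hφ.pairwiseDisjoint_Ici_fibre μ).subset Set.inter_subset_left).mono
      fun _ _ hη => hη.2.le⟩

/-- Partition of the fibre over `ν` inside `Ici α` according to covered lifts of `μ`. -/
theorem fibre_partition_of_cover {P Q : Type*}
    [PartialOrder P] [PartialOrder Q] [Fintype P] [Fintype Q]
    (φ : P → Q) (hφ : Combinatorial φ) (α : P) (μ ν : Q)
    (hμ : φ α ≤ μ) (hν : φ α ≤ ν) (hcov : μ ⋖ ν) :
    (φ ⁻¹' {ν} ∩ Set.Ici α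
        = ⋃ γ ∈ φ ⁻¹' {μ} ∩ Set.Ici α, (φ ⁻¹' {ν} ∩ {η : P | γ ⋖ η})) ∧
    ((φ ⁻¹' {μ} ∩ Set.Ici α).PairwiseDisjoint
        (fun γ => φ ⁻¹' {ν} ∩ {η : P | γ ⋖ η})) :=
  fibre_partition_of_cover_general hφ hμ hcov
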